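/- Let β < 2 and λ ∈ ℝ. Then ∫_0^∞ (e^{iλx} − 1 − iλx·1_{{x<1}}) · e^{β x}(e^x − 1)^{−2} dx = iλ·( ã_β + 1 − C ) + (−iλ + 1 − β)·ψ(−iλ + 2 − β) − (1 − β)·ψ(2 − β), where C is the Euler–Mascheroni constant, ψ(z) = Γ′(z)/Γ(z) is the digamma function (the logarithmic derivative of the complex Gamma function), and ã_β = ∫_0^1 x e^{−x}(1 − e^{−(1−β)x})/(1−e^{−x})^{2} dx + ∫_0^1 e^{−x}(1 − x − e^{−x})/(1−e^{−x})^{2} dx + ∫_1^∞ e^{−x}/(1−e^{−x}) dx. This gives the characteristic exponent of a Lamperti stable process of index α = 1. -/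

import Mathlib

open MeasureTheory Set

/-- The digamma function `ψ(z) = Γ′(z)/Γ(z)`, the logarithmic derivative of the
complex Gamma function. -/
noncomputable def complexDigamma (z : ℂ) : ℂ := deriv Complex.Gamma z / Complex.Gamma z

/-!
Write `q = 1 - e^{-x}`. The jump density is `e^{-(2 - β)x} / q²`, so apart from the compensator the
integrand is a difference of values of `s ↦ e^{-sx} / q²`, which is not integrable at `x = 0`.
Subtracting the affine interpolant of this function at `s = 1` and `s = 2` restores integrability;
the affine parts combine with the compensator into `iλ` times
`e^{-x} / q - x 1_{x < 1} e^{-(2 - β)x} / q²`, whose integral is `ã_β`. The interpolated kernel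
exceeds the derivative of Gauss's kernel `(e^{-x} - e^{-sx}) / q` by `s - 1` times that kernel, so
its integral reduces to Gauss's formula `∫₀^∞ (e^{-x} - e^{-sx}) / q dx = ψ(s) + γ`. The latter
follows by computing the limit of `ε⁻¹ - B(s, ε) = B(1, ε) - B(s, ε)` as `ε → 0⁺` in two ways, from
the Gamma function and under the integral sign.
-/

open Asymptotics Complex Filter Topology

theorem tendsto_div_nhdsNE_of_hasDerivAt {𝕜 K : Type*} [NontriviallyNormedField 𝕜]
    [NormedField K] [NormedAlgebra 𝕜 K] {f g : 𝕜 → K} {f' g' : K} {a : 𝕜}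
    (hf : HasDerivAt f f' a) (hg : HasDerivAt g g' a) (hfa : f a = 0) (hga : g a = 0)
    (hg' : g' ≠ 0) : Tendsto (fun x ↦ f x / g x) (𝓝[≠] a) (𝓝 (f' / g')) := by
  refine (hf.tendsto_slope.div hg.tendsto_slope hg').congr' ?_
  filter_upwards [self_mem_nhdsWithin] with x hx
  have hxa : algebraMap 𝕜 K (x - a)⁻¹ ≠ 0 := by simpa [sub_eq_zero] using hx
  simp only [Pi.div_apply, slope_def_module, hfa, hga, sub_zero, Algebra.smul_def]
  exact mul_div_mul_left _ _ hxa

theorem integrableOn_Ioc_of_isBigO_one {E : Type*} [NormedAddCommGroup E] {f : ℝ → E} {a b : ℝ}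
    (hf : ContinuousOn f (Ioc a b)) (ha : f =O[𝓝[>] a] fun _ ↦ (1 : ℝ)) :
    IntegrableOn f (Ioc a b) := by
  rcases le_or_gt b a with hba | hab
  · simp [Ioc_eq_empty_of_le hba]
  have hmeas : StronglyMeasurableAtFilter f (𝓝[>] a) :=
    ⟨Ioc a b, Ioc_mem_nhdsGT hab, hf.aestronglyMeasurable measurableSet_Ioc⟩
  have hone : IntegrableAtFilter (fun _ ↦ (1 : ℝ)) (𝓝[>] a) :=
    ⟨Ioc a b, Ioc_mem_nhdsGT hab, by simp⟩
  obtain ⟨s, hs, hfs⟩ := ha.integrableAtFilter hmeas hone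
  obtain ⟨u, hau, hus⟩ := mem_nhdsGT_iff_exists_Ioo_subset.1 hs
  have hub : IntegrableOn f (Icc u b) :=
    (hf.mono (Icc_subset_Ioc hau le_rfl)).integrableOn_Icc
  refine ((hfs.mono_set hus).union hub).mono_set fun x hx ↦ ?_
  rcases lt_or_ge x u with hxu | hxu
  exacts [Or.inl ⟨hx.1, hxu⟩, Or.inr ⟨hxu, hx.2⟩]

/-! ### The beta integral near its pole -/

theorem image_exp_neg_Ioi_zero : (fun x : ℝ ↦ Real.exp (-x)) '' Ioi 0 = Ioo 0 1 := by
  ext t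
  refine ⟨?_, fun ht ↦ ⟨-Real.log t, ?_, ?_⟩⟩
  · rintro ⟨x, hx, rfl⟩
    exact ⟨Real.exp_pos _, by simpa using hx⟩
  · simpa using Real.log_neg ht.1 ht.2
  · simp [Real.exp_log ht.1]

theorem hasDerivWithinAt_real_exp_neg (x : ℝ) (t : Set ℝ) :
    HasDerivWithinAt (fun x : ℝ ↦ Real.exp (-x)) (-Real.exp (-x)) t x := by
  simpa using ((hasDerivAt_id x).neg).exp.hasDerivWithinAt

theorem antitone_real_exp_neg : Antitone fun x : ℝ ↦ Real.exp (-x) :=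
  fun _ _ h ↦ Real.exp_le_exp.2 (neg_le_neg h)

section ChangeOfVariables

variable {E : Type*} [NormedAddCommGroup E] [NormedSpace ℝ E]

theorem integrableOn_Ioo_zero_one_iff_comp_exp_neg (f : ℝ → E) :
    IntegrableOn f (Ioo 0 1) ↔
      IntegrableOn (fun x ↦ Real.exp (-x) • f (Real.exp (-x))) (Ioi 0) := by
  rw [← image_exp_neg_Ioi_zero]
  simpa using integrableOn_image_iff_integrableOn_deriv_smul_of_antitoneOn measurableSet_Ioi
    (fun x _ ↦ hasDerivWithinAt_real_exp_neg x _) (antitone_real_exp_neg.antitoneOn _) f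

theorem integral_Ioo_zero_one_eq_comp_exp_neg (f : ℝ → E) :
    ∫ t in Ioo 0 1, f t = ∫ x in Ioi 0, Real.exp (-x) • f (Real.exp (-x)) := by
  rw [← image_exp_neg_Ioi_zero]
  simpa using integral_image_eq_integral_deriv_smul_of_antitoneOn measurableSet_Ioi
    (fun x _ ↦ hasDerivWithinAt_real_exp_neg x _) (antitone_real_exp_neg.antitoneOn _) f

end ChangeOfVariables

theorem exp_neg_smul_betaIntegrand (u v : ℂ) (x : ℝ) :
    Real.exp (-x) • ((Real.exp (-x) : ℂ) ^ (u - 1) * (1 - (Real.exp (-x) : ℂ)) ^ (v - 1)) =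
      exp (-(u * x)) * (1 - exp (-x)) ^ (v - 1) := by
  have hpow : (Real.exp (-x) : ℂ) ^ (u - 1) = exp (-x * (u - 1)) := by
    rw [cpow_def_of_ne_zero (by simp), ← ofReal_log (Real.exp_pos _).le, Real.log_exp, ofReal_neg]
  rw [hpow, real_smul, ← mul_assoc]
  push_cast
  rw [← exp_add]
  ring_nf

theorem integrableOn_exp_neg_mul_mul_one_sub_exp_neg_cpow {u v : ℂ} (hu : 0 < u.re)
    (hv : 0 < v.re) :
    IntegrableOn (fun x : ℝ ↦ exp (-(u * x)) * (1 - exp (-x)) ^ (v - 1)) (Ioi 0) := by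
  have h := betaIntegral_convergent hu hv
  rw [intervalIntegrable_iff_integrableOn_Ioo_of_le zero_le_one,
    integrableOn_Ioo_zero_one_iff_comp_exp_neg] at h
  simpa only [exp_neg_smul_betaIntegrand] using h

theorem betaIntegral_eq_integral_exp_neg (u v : ℂ) :
    betaIntegral u v = ∫ x : ℝ in Ioi 0, exp (-(u * x)) * (1 - exp (-x)) ^ (v - 1) := by
  rw [betaIntegral, intervalIntegral.integral_of_le zero_le_one, integral_Ioc_eq_integral_Ioo,
    integral_Ioo_zero_one_eq_comp_exp_neg]
  simp only [exp_neg_smul_betaIntegrand]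

theorem differentiableAt_Gamma_of_re_pos {s : ℂ} (hs : 0 < s.re) : DifferentiableAt ℂ Gamma s := by
  refine differentiableAt_Gamma s fun m hm ↦ ?_
  have : s.re = -m := by simp [hm]
  linarith [m.cast_nonneg (α := ℝ)]

theorem hasDerivAt_Gamma_one_add_div_Gamma_add {s : ℂ} (hs : 0 < s.re) :
    HasDerivAt (fun w ↦ Gamma (1 + w) * Gamma s / Gamma (s + w)) (digamma 1 - digamma s) 0 := by
  have hΓ {z : ℂ} (hz : 0 < z.re) : HasDerivAt (fun w ↦ Gamma (z + w)) (deriv Gamma z) 0 := by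
    have h := (differentiableAt_Gamma_of_re_pos hz).hasDerivAt
    exact HasDerivAt.comp_const_add z 0 (by simpa using h)
  have hs₀ := Gamma_ne_zero_of_re_pos hs
  refine (((hΓ (by simp)).mul_const (Gamma s)).div (hΓ hs) (by simpa using hs₀)).congr_deriv ?_
  simp only [digamma_def, logDeriv_apply, add_zero, Gamma_one]
  field_simp

theorem tendsto_inv_sub_betaIntegral {s : ℂ} (hs : 0 < s.re) :
    Tendsto (fun ε : ℝ ↦ (ε : ℂ)⁻¹ - betaIntegral s ε) (𝓝[>] 0)
      (𝓝 (digamma s + Real.eulerMascheroniConstant)) := by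
  have hderiv : HasDerivAt (fun ε : ℝ ↦ Gamma (1 + ε) * Gamma s / Gamma (s + ε))
      (digamma 1 - digamma s) 0 :=
    HasDerivAt.comp_ofReal (by
      rw [ofReal_zero]; exact hasDerivAt_Gamma_one_add_div_Gamma_add hs)
  have hlim := hderiv.tendsto_slope_zero_right.neg
  rw [digamma_one, neg_sub, sub_neg_eq_add] at hlim
  refine hlim.congr' ?_
  filter_upwards [self_mem_nhdsWithin] with ε (hε : 0 < ε)
  have hε₀ : (ε : ℂ) ≠ 0 := ofReal_ne_zero.2 hε.ne'
  have hs₀ := Gamma_ne_zero_of_re_pos hs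
  rw [betaIntegral_eq_Gamma_mul_div s ε hs (by simpa), zero_add, add_comm (1 : ℂ) ε,
    Gamma_add_one _ hε₀]
  simp only [ofReal_zero, add_zero, Gamma_one, one_mul, div_self hs₀, real_smul, ofReal_inv]
  field_simp
  ring

/-! ### Integrals over powers of `1 - e^{-x}` -/

theorem one_sub_exp_neg_ne_zero {x : ℝ} (hx : x ≠ 0) : 1 - exp (-x) ≠ 0 := by
  have h : Real.exp (-x) ≠ 1 := mt (Real.exp_eq_one_iff _).1 (neg_ne_zero.2 hx)
  exact_mod_cast sub_ne_zero.2 h.symm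

theorem hasDerivAt_exp_neg_mul (s : ℂ) (x : ℝ) :
    HasDerivAt (fun x : ℝ ↦ exp (-(s * x))) (-(s * exp (-(s * x)))) x := by
  have h : HasDerivAt (fun z : ℂ ↦ exp (-(s * z))) (exp (-(s * x)) * -(s * 1)) x :=
    (((hasDerivAt_id (x : ℂ)).const_mul s).neg).cexp
  exact h.comp_ofReal.congr_deriv (by ring)

theorem hasDerivAt_one_sub_exp_neg (x : ℝ) :
    HasDerivAt (fun x : ℝ ↦ 1 - exp (-x)) (exp (-x)) x := by
  simpa using (hasDerivAt_exp_neg_mul 1 x).const_sub 1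

theorem exp_neg_mul_sub_one_isBigO (s : ℂ) :
    (fun x : ℝ ↦ exp (-(s * x)) - 1) =O[𝓝 0] fun x : ℝ ↦ x := by
  simpa using (hasDerivAt_exp_neg_mul s 0).isBigO_sub

theorem exp_neg_mul_sub_one_add_isBigO_sq (s : ℂ) :
    (fun x : ℝ ↦ exp (-(s * x)) - 1 + s * x) =O[𝓝 0] fun x : ℝ ↦ x ^ 2 := by
  have hlim : Tendsto (fun x : ℝ ↦ -(s * x)) (𝓝 0) (𝓝 0) :=
    Continuous.tendsto' (by fun_prop) _ _ (by simp)
  have hexp := (exp_sub_sum_range_isBigO_pow 2).comp_tendsto hlim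
  have hsq : (fun x : ℝ ↦ (-(s * x)) ^ 2) =O[𝓝 0] fun x : ℝ ↦ x ^ 2 :=
    .of_bound (‖s‖ ^ 2) (.of_forall fun x ↦ by simp [mul_pow])
  refine (hexp.trans hsq).congr_left fun x ↦ ?_
  simp only [Function.comp_apply, Finset.sum_range_succ, Finset.sum_range_zero,
    Nat.factorial_zero, Nat.factorial_one, Nat.cast_one, pow_zero, pow_one, div_one]
  ring

theorem isTheta_one_sub_exp_neg :
    (fun x : ℝ ↦ 1 - exp (-x)) =Θ[𝓝 0] fun x : ℝ ↦ x := by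
  have h : HasDerivAt (fun x : ℝ ↦ 1 - exp (-x)) 1 0 := by
    simpa using hasDerivAt_one_sub_exp_neg 0
  have hΘ := HasDerivAtFilter.isTheta_sub h one_ne_zero
  have hpair : Tendsto (fun x : ℝ ↦ (x, (0 : ℝ))) (𝓝 0) (𝓝 0 ×ˢ pure 0) :=
    tendsto_id.prodMk (tendsto_pure_pure _ _ |>.comp tendsto_const_pure)
  simpa [IsTheta, Function.comp_def] using
    And.intro (hΘ.1.comp_tendsto hpair) (hΘ.2.comp_tendsto hpair)

theorem continuousOn_div_one_sub_exp_neg_pow {f : ℝ → ℂ} {t : Set ℝ} (hf : ContinuousOn f t)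
    (ht : 0 ∉ t) (n : ℕ) : ContinuousOn (fun x : ℝ ↦ f x / (1 - exp (-x)) ^ n) t :=
  hf.div (by fun_prop) fun _ hx ↦
    pow_ne_zero n (one_sub_exp_neg_ne_zero (ne_of_mem_of_not_mem hx ht))

theorem integrableOn_Ioc_div_one_sub_exp_neg_pow {f : ℝ → ℂ} {b : ℝ} {n : ℕ}
    (hf : ContinuousOn f (Ioc 0 b)) (hf₀ : f =O[𝓝[>] 0] fun x ↦ x ^ n) :
    IntegrableOn (fun x : ℝ ↦ f x / (1 - exp (-x)) ^ n) (Ioc 0 b) := by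
  refine integrableOn_Ioc_of_isBigO_one
    (continuousOn_div_one_sub_exp_neg_pow hf (by simp) n) ?_
  have hΘ := (isTheta_one_sub_exp_neg.mono (nhdsWithin_le_nhds (s := Ioi 0))).pow n
  refine (hf₀.mul hΘ.inv.isBigO).trans_eventuallyEq ?_
  filter_upwards [self_mem_nhdsWithin] with x hx
  exact mul_inv_cancel₀ (pow_ne_zero n (ne_of_gt hx))

theorem integrableOn_Ioi_div_one_sub_exp_neg_pow_of_pos {f : ℝ → ℂ} {a : ℝ} (ha : 0 < a) (n : ℕ)
    (hf : IntegrableOn f (Ioi a)) :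
    IntegrableOn (fun x : ℝ ↦ f x / (1 - exp (-x)) ^ n) (Ioi a) := by
  have hmeas : AEStronglyMeasurable (fun x : ℝ ↦ ((1 - exp (-x)) ^ n)⁻¹)
      (volume.restrict (Ioi a)) := by
    refine ContinuousOn.aestronglyMeasurable ?_ measurableSet_Ioi
    exact ContinuousOn.inv₀ (by fun_prop) fun x hx ↦
      pow_ne_zero n (one_sub_exp_neg_ne_zero (ha.trans hx).ne')
  refine hf.mul_bdd (c := ((1 - Real.exp (-a)) ^ n)⁻¹) hmeas ?_
  filter_upwards [ae_restrict_mem measurableSet_Ioi] with x hx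
  have hexp : Real.exp (-x) ≤ Real.exp (-a) := Real.exp_le_exp.2 (neg_le_neg (le_of_lt hx))
  have hpos : 0 < 1 - Real.exp (-a) := by simpa using ha
  have hnorm : 1 - Real.exp (-a) ≤ ‖1 - exp (-x)‖ := by
    rw [← ofReal_neg, ← ofReal_exp, ← ofReal_one, ← ofReal_sub, norm_real]
    exact (sub_le_sub_left hexp 1).trans (Real.le_norm_self _)
  rw [norm_inv, norm_pow]
  gcongr

theorem integrableOn_Ioi_div_one_sub_exp_neg_pow {f : ℝ → ℂ} {n : ℕ}
    (hf : ContinuousOn f (Ioi 0)) (hf₀ : f =O[𝓝[>] 0] fun x ↦ x ^ n)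
    (hint : IntegrableOn f (Ioi 1)) :
    IntegrableOn (fun x : ℝ ↦ f x / (1 - exp (-x)) ^ n) (Ioi 0) := by
  rw [← Ioc_union_Ioi_eq_Ioi zero_le_one]
  exact (integrableOn_Ioc_div_one_sub_exp_neg_pow (hf.mono Ioc_subset_Ioi_self) hf₀).union
    (integrableOn_Ioi_div_one_sub_exp_neg_pow_of_pos one_pos n hint)

theorem integrableOn_Ioi_exp_neg_mul {s : ℂ} (hs : 0 < s.re) (c : ℝ) :
    IntegrableOn (fun x : ℝ ↦ exp (-(s * x))) (Ioi c) := by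
  simpa using integrableOn_exp_mul_complex_Ioi (a := -s) (by simpa) c

theorem tendsto_exp_neg_mul_atTop {s : ℂ} (hs : 0 < s.re) :
    Tendsto (fun x : ℝ ↦ exp (-(s * x))) atTop (𝓝 0) := by
  rw [tendsto_exp_nhds_zero_iff]
  simpa using tendsto_id.const_mul_atTop hs

/-! ### Gauss kernels -/

/-- Gauss's kernel, whose integral over `(0, ∞)` is `ψ(s) + γ`. -/
noncomputable def gaussKernel (s : ℂ) (x : ℝ) : ℂ :=
  (exp (-x) - exp (-(s * x))) / (1 - exp (-x))

/-- The second-order Gauss kernel: `e^{-sx} / (1 - e^{-x})²` minus the affine function of `s` that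
agrees with it at `s = 1` and `s = 2`, which cancels the singularity at `x = 0`. -/
noncomputable def gaussKernelTwo (s : ℂ) (x : ℝ) : ℂ :=
  (exp (-(s * x)) - (2 - s) * exp (-x) - (s - 1) * exp (-(2 * x))) / (1 - exp (-x)) ^ 2

theorem integrableOn_gaussKernel {s : ℂ} (hs : 0 < s.re) :
    IntegrableOn (gaussKernel s) (Ioi 0) := by
  have hzero : (fun x : ℝ ↦ exp (-(1 * x)) - exp (-(s * x))) =O[𝓝 0] fun x : ℝ ↦ x ^ 1 :=
    ((exp_neg_mul_sub_one_isBigO 1).sub (exp_neg_mul_sub_one_isBigO s)).congr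
      (fun x ↦ by ring) fun x ↦ by ring
  have hint : IntegrableOn (fun x : ℝ ↦ exp (-(1 * x)) - exp (-(s * x))) (Ioi 1) :=
    (integrableOn_Ioi_exp_neg_mul (by simp) 1).sub (integrableOn_Ioi_exp_neg_mul hs 1)
  simpa [gaussKernel] using! integrableOn_Ioi_div_one_sub_exp_neg_pow (by fun_prop)
    (hzero.mono nhdsWithin_le_nhds) hint

theorem integrableOn_gaussKernelTwo {s : ℂ} (hs : 0 < s.re) :
    IntegrableOn (gaussKernelTwo s) (Ioi 0) := by
  let f (x : ℝ) : ℂ := exp (-(s * x)) - (2 - s) * exp (-(1 * x)) - (s - 1) * exp (-(2 * x))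
  have hzero : f =O[𝓝 0] fun x : ℝ ↦ x ^ 2 :=
    (((exp_neg_mul_sub_one_add_isBigO_sq s).sub
      ((exp_neg_mul_sub_one_add_isBigO_sq 1).const_mul_left (2 - s))).sub
      ((exp_neg_mul_sub_one_add_isBigO_sq 2).const_mul_left (s - 1))).congr_left
      fun x ↦ by ring
  have hint : IntegrableOn f (Ioi 1) :=
    ((integrableOn_Ioi_exp_neg_mul hs 1).sub
      ((integrableOn_Ioi_exp_neg_mul (by simp) 1).const_mul (2 - s))).sub
      ((integrableOn_Ioi_exp_neg_mul (by simp) 1).const_mul (s - 1))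
  simpa [f, gaussKernelTwo] using! integrableOn_Ioi_div_one_sub_exp_neg_pow (by fun_prop)
    (hzero.mono nhdsWithin_le_nhds) hint

theorem tendsto_gaussKernel_nhdsNE_zero (s : ℂ) :
    Tendsto (gaussKernel s) (𝓝[≠] 0) (𝓝 (s - 1)) := by
  have hnum : HasDerivAt (fun x : ℝ ↦ exp (-(1 * x)) - exp (-(s * x))) (s - 1) 0 :=
    ((hasDerivAt_exp_neg_mul 1 0).sub (hasDerivAt_exp_neg_mul s 0)).congr_deriv (by simp; ring)
  have hden : HasDerivAt (fun x : ℝ ↦ 1 - exp (-x)) 1 0 := by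
    simpa using hasDerivAt_one_sub_exp_neg 0
  simpa [gaussKernel] using!
    tendsto_div_nhdsNE_of_hasDerivAt hnum hden (by simp) (by simp) one_ne_zero

theorem tendsto_gaussKernel_atTop {s : ℂ} (hs : 0 < s.re) :
    Tendsto (gaussKernel s) atTop (𝓝 0) := by
  have hexp : Tendsto (fun x : ℝ ↦ exp (-x)) atTop (𝓝 0) := by
    simpa using tendsto_exp_neg_mul_atTop (s := 1) (by simp)
  simpa [gaussKernel] using!
    (hexp.sub (tendsto_exp_neg_mul_atTop hs)).div (hexp.const_sub 1) (by simp)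

theorem exp_neg_two_mul (z : ℂ) : exp (-(2 * z)) = exp (-z) ^ 2 := by
  rw [sq, ← exp_add, two_mul, neg_add]

theorem hasDerivAt_gaussKernel (s : ℂ) {x : ℝ} (hx : x ≠ 0) :
    HasDerivAt (gaussKernel s) (gaussKernelTwo s x - (s - 1) * gaussKernel s x) x := by
  have hq := one_sub_exp_neg_ne_zero hx
  have hexp : HasDerivAt (fun x : ℝ ↦ exp (-x)) (-exp (-x)) x := by
    simpa using hasDerivAt_exp_neg_mul 1 x
  refine ((hexp.sub (hasDerivAt_exp_neg_mul s x)).div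
    (hasDerivAt_one_sub_exp_neg x) hq).congr_deriv ?_
  simp only [gaussKernel, gaussKernelTwo, exp_neg_two_mul, Pi.sub_apply]
  field_simp
  ring

theorem integral_gaussKernelTwo {s : ℂ} (hs : 0 < s.re) :
    ∫ x in Ioi 0, gaussKernelTwo s x = 1 - s + (s - 1) * ∫ x in Ioi 0, gaussKernel s x := by
  have hD := (integrableOn_gaussKernel hs).const_mul (s - 1)
  have hboundary : ∫ x in Ioi 0, (gaussKernelTwo s x - (s - 1) * gaussKernel s x) = 1 - s := by
    have hlim : Tendsto (gaussKernel s) (𝓝[>] 0) (𝓝 (s - 1)) :=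
      (tendsto_gaussKernel_nhdsNE_zero s).mono_left (nhdsGT_le_nhdsNE 0)
    have h := integral_Ioi_deriv_mul_eq_sub (v := 1) (v' := 0)
      (fun x hx ↦ hasDerivAt_gaussKernel s (ne_of_gt hx)) (fun x _ ↦ hasDerivAt_const x 1)
      (by simpa using! (integrableOn_gaussKernelTwo hs).sub hD)
      (by simpa using hlim) (by simpa using tendsto_gaussKernel_atTop hs)
    simpa using h
  rw [← integral_const_mul, ← hboundary, integral_sub (integrableOn_gaussKernelTwo hs) hD]
  ring

theorem norm_one_sub_exp_neg_cpow_sub_one_le {x ε : ℝ} (hx : 0 < x) (hε : 0 ≤ ε) :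
    ‖(1 - exp (-x)) ^ ((ε : ℂ) - 1)‖ ≤ ‖(1 - exp (-x))⁻¹‖ := by
  have hpos : 0 < 1 - Real.exp (-x) := by simpa using hx
  have hle : 1 - Real.exp (-x) ≤ 1 := by simpa using (Real.exp_pos (-x)).le
  have hcast : 1 - exp (-x) = (1 - Real.exp (-x) : ℝ) := by push_cast; rfl
  rw [hcast, norm_cpow_eq_rpow_re_of_pos hpos, norm_inv, norm_real, Real.norm_of_nonneg hpos.le,
    ← Real.rpow_neg_one]
  exact Real.rpow_le_rpow_of_exponent_ge hpos hle (by simpa using hε)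

theorem inv_sub_betaIntegral_eq_integral {s ε : ℂ} (hs : 0 < s.re) (hε : 0 < ε.re) :
    ε⁻¹ - betaIntegral s ε =
      ∫ x : ℝ in Ioi 0, (exp (-x) - exp (-(s * x))) * (1 - exp (-x)) ^ (ε - 1) := by
  have hone : 0 < (1 : ℂ).re := by simp
  rw [← one_div, ← betaIntegral_eval_one_right hε, betaIntegral_symm,
    betaIntegral_eq_integral_exp_neg, betaIntegral_eq_integral_exp_neg,
    ← integral_sub (integrableOn_exp_neg_mul_mul_one_sub_exp_neg_cpow hone hε)
      (integrableOn_exp_neg_mul_mul_one_sub_exp_neg_cpow hs hε)]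
  simp only [one_mul, sub_mul]

theorem tendsto_inv_sub_betaIntegral_integral_gaussKernel {s : ℂ} (hs : 0 < s.re) :
    Tendsto (fun ε : ℝ ↦ (ε : ℂ)⁻¹ - betaIntegral s ε) (𝓝[>] 0)
      (𝓝 (∫ x in Ioi 0, gaussKernel s x)) := by
  have heq : (fun ε : ℝ ↦ ∫ x : ℝ in Ioi 0,
      (exp (-x) - exp (-(s * x))) * (1 - exp (-x)) ^ ((ε : ℂ) - 1)) =ᶠ[𝓝[>] 0]
      fun ε ↦ (ε : ℂ)⁻¹ - betaIntegral s ε := by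
    filter_upwards [self_mem_nhdsWithin] with ε hε
    exact (inv_sub_betaIntegral_eq_integral hs (by simpa using hε)).symm
  refine Tendsto.congr' heq ?_
  refine tendsto_integral_filter_of_dominated_convergence (fun x ↦ ‖gaussKernel s x‖) ?_ ?_
    (integrableOn_gaussKernel hs).norm ?_
  · refine .of_forall fun ε ↦ ContinuousOn.aestronglyMeasurable ?_ measurableSet_Ioi
    refine ContinuousOn.mul (by fun_prop) (.cpow (by fun_prop) (by fun_prop) fun x hx ↦ ?_)
    exact Or.inl (by simpa [exp_re] using hx)
  · filter_upwards [self_mem_nhdsWithin] with ε (hε : 0 < ε)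
    filter_upwards [ae_restrict_mem measurableSet_Ioi] with x hx
    rw [gaussKernel, div_eq_mul_inv, norm_mul, norm_mul]
    gcongr
    exact norm_one_sub_exp_neg_cpow_sub_one_le hx hε.le
  · filter_upwards [ae_restrict_mem measurableSet_Ioi] with x hx
    rw [gaussKernel, div_eq_mul_inv, ← cpow_neg_one]
    have hcont : Continuous fun ε : ℝ ↦ (1 - exp (-x)) ^ ((ε : ℂ) - 1) :=
      .const_cpow (by fun_prop) (.inl (one_sub_exp_neg_ne_zero (ne_of_gt hx)))
    refine ((hcont.tendsto' 0 _ ?_).mono_left nhdsWithin_le_nhds).const_mul _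
    simp

theorem integral_gaussKernel {s : ℂ} (hs : 0 < s.re) :
    ∫ x in Ioi 0, gaussKernel s x = digamma s + Real.eulerMascheroniConstant :=
  tendsto_nhds_unique (tendsto_inv_sub_betaIntegral_integral_gaussKernel hs)
    (tendsto_inv_sub_betaIntegral hs)

/-! ### The compensator and the characteristic exponent -/

/-- The constant `ã_β` of the characteristic exponent, extended to complex `β`. -/
noncomputable def lampertiShift (β : ℂ) : ℂ :=
  (∫ x : ℝ in (0)..1, x * exp (-x) * (1 - exp (-((1 - β) * x))) / (1 - exp (-x)) ^ 2)
    + (∫ x : ℝ in (0)..1, exp (-x) * (1 - x - exp (-x)) / (1 - exp (-x)) ^ 2)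
    + ∫ x : ℝ in Ioi 1, exp (-x) / (1 - exp (-x))

/-- The part of the compensated integrand that is linear in the argument of the exponent, once the
rest is expressed through `gaussKernelTwo`. Its integral over `(0, ∞)` is `lampertiShift β`. -/
noncomputable def compensatorKernel (β : ℂ) (x : ℝ) : ℂ :=
  exp (-x) / (1 - exp (-x)) -
    (if x < 1 then x * exp (-((2 - β) * x)) / (1 - exp (-x)) ^ 2 else 0)

theorem integrableOn_mul_exp_neg_mul_one_sub_exp_neg_div (c : ℂ) :
    IntegrableOn (fun x : ℝ ↦ x * exp (-x) * (1 - exp (-(c * x))) / (1 - exp (-x)) ^ 2)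
      (Ioc 0 1) := by
  refine integrableOn_Ioc_div_one_sub_exp_neg_pow (by fun_prop) ?_
  have hexp : (fun x : ℝ ↦ exp (-x)) =O[𝓝 0] fun _ ↦ (1 : ℝ) :=
    (Continuous.tendsto (by fun_prop) 0).isBigO_one ℝ
  have hx : (fun x : ℝ ↦ (x : ℂ)) =O[𝓝 0] fun x ↦ x := isBigO_ofReal_left.2 (isBigO_refl _ _)
  refine ((hx.mul hexp).mul (exp_neg_mul_sub_one_isBigO c).neg_left).mono nhdsWithin_le_nhds
    |>.congr (fun x ↦ by ring) fun x ↦ by ring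

theorem integrableOn_exp_neg_mul_one_sub_sub_exp_neg_div :
    IntegrableOn (fun x : ℝ ↦ exp (-x) * (1 - x - exp (-x)) / (1 - exp (-x)) ^ 2) (Ioc 0 1) := by
  refine integrableOn_Ioc_div_one_sub_exp_neg_pow (by fun_prop) ?_
  have hexp : (fun x : ℝ ↦ exp (-x)) =O[𝓝 0] fun _ ↦ (1 : ℝ) :=
    (Continuous.tendsto (by fun_prop) 0).isBigO_one ℝ
  refine (hexp.mul (exp_neg_mul_sub_one_add_isBigO_sq 1).neg_left).mono nhdsWithin_le_nhds
    |>.congr (fun x ↦ by ring_nf) fun x ↦ by ring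

theorem integrableOn_Ioi_one_exp_neg_div_one_sub_exp_neg :
    IntegrableOn (fun x : ℝ ↦ exp (-x) / (1 - exp (-x))) (Ioi 1) := by
  simpa using integrableOn_Ioi_div_one_sub_exp_neg_pow_of_pos one_pos 1
    (integrableOn_Ioi_exp_neg_mul (s := 1) (by simp) 1)

theorem compensatorKernel_of_mem_Ioo (β : ℂ) {x : ℝ} (hx : x ∈ Ioo 0 1) :
    compensatorKernel β x = x * exp (-x) * (1 - exp (-((1 - β) * x))) / (1 - exp (-x)) ^ 2 +
      exp (-x) * (1 - x - exp (-x)) / (1 - exp (-x)) ^ 2 := by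
  have hq := one_sub_exp_neg_ne_zero hx.1.ne'
  have hmul : exp (-((2 - β) * x)) = exp (-x) * exp (-((1 - β) * x)) := by
    rw [← exp_add]; ring_nf
  rw [compensatorKernel, if_pos hx.2, hmul]
  field_simp
  ring

theorem compensatorKernel_of_one_le (β : ℂ) {x : ℝ} (hx : 1 ≤ x) :
    compensatorKernel β x = exp (-x) / (1 - exp (-x)) := by
  rw [compensatorKernel, if_neg hx.not_gt, sub_zero]

theorem integrableOn_Ioo_compensatorKernel (β : ℂ) :
    IntegrableOn (compensatorKernel β) (Ioo 0 1) := by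
  refine IntegrableOn.congr_fun ?_ (fun x hx ↦ (compensatorKernel_of_mem_Ioo β hx).symm)
    measurableSet_Ioo
  exact ((integrableOn_mul_exp_neg_mul_one_sub_exp_neg_div (1 - β)).add
    integrableOn_exp_neg_mul_one_sub_sub_exp_neg_div).mono_set Ioo_subset_Ioc_self

theorem integrableOn_Ici_compensatorKernel (β : ℂ) :
    IntegrableOn (compensatorKernel β) (Ici 1) := by
  refine IntegrableOn.congr_fun ?_ (fun x hx ↦ (compensatorKernel_of_one_le β hx).symm)
    measurableSet_Ici
  rw [integrableOn_Ici_iff_integrableOn_Ioi]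
  exact integrableOn_Ioi_one_exp_neg_div_one_sub_exp_neg

theorem integrableOn_compensatorKernel (β : ℂ) : IntegrableOn (compensatorKernel β) (Ioi 0) := by
  rw [← Ioo_union_Ici_eq_Ioi one_pos]
  exact (integrableOn_Ioo_compensatorKernel β).union (integrableOn_Ici_compensatorKernel β)

theorem integral_compensatorKernel (β : ℂ) :
    ∫ x in Ioi 0, compensatorKernel β x = lampertiShift β := by
  rw [← Ioo_union_Ici_eq_Ioi one_pos,
    setIntegral_union (Iio_disjoint_Ici le_rfl |>.mono_left Ioo_subset_Iio_self) measurableSet_Ici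
      (integrableOn_Ioo_compensatorKernel β) (integrableOn_Ici_compensatorKernel β),
    setIntegral_congr_fun measurableSet_Ioo fun x hx ↦ compensatorKernel_of_mem_Ioo β hx,
    setIntegral_congr_fun measurableSet_Ici fun x hx ↦ compensatorKernel_of_one_le β hx,
    ← integral_Ioc_eq_integral_Ioo, integral_Ici_eq_integral_Ioi,
    integral_add (integrableOn_mul_exp_neg_mul_one_sub_exp_neg_div (1 - β))
      integrableOn_exp_neg_mul_one_sub_sub_exp_neg_div,
    ← intervalIntegral.integral_of_le zero_le_one, ← intervalIntegral.integral_of_le zero_le_one,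
    lampertiShift]

theorem exp_mul_mul_exp_sub_one_zpow_neg_two (β : ℂ) (x : ℝ) :
    exp (β * x) * (exp x - 1) ^ (-2 : ℤ) = exp (-((2 - β) * x)) / (1 - exp (-x)) ^ 2 := by
  have hfac : exp x - 1 = exp x * (1 - exp (-x)) := by
    rw [mul_sub, ← exp_add, add_neg_cancel, exp_zero, mul_one]
  have hsq : exp (x : ℂ) ^ 2 = exp (2 * x) := by rw [← exp_nat_mul, Nat.cast_ofNat]
  have hexp : exp (-((2 - β) * x)) = exp (β * x) / exp (2 * x) := by
    rw [← exp_sub]; ring_nf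
  rw [zpow_neg, zpow_ofNat, hfac, mul_pow, hsq, hexp, mul_inv, ← mul_assoc, div_eq_mul_inv,
    div_eq_mul_inv]

theorem lamperti_integrand_eq (β w : ℂ) {x : ℝ} (hx : x ≠ 0) :
    (exp (w * x) - 1 - w * x * (if x < 1 then 1 else 0)) *
        (exp (β * x) * (exp x - 1) ^ (-2 : ℤ)) =
      gaussKernelTwo (-w + 2 - β) x - gaussKernelTwo (2 - β) x + w * compensatorKernel β x := by
  have hq := one_sub_exp_neg_ne_zero hx
  have hmul : exp (-((-w + 2 - β) * x)) = exp (w * x) * exp (-((2 - β) * x)) := by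
    rw [← exp_add]; ring_nf
  rw [exp_mul_mul_exp_sub_one_zpow_neg_two, gaussKernelTwo, gaussKernelTwo, compensatorKernel,
    hmul, exp_neg_two_mul]
  split_ifs <;> field_simp <;> ring

theorem lampertiShift_ofReal (β : ℝ) :
    lampertiShift β =
      (((∫ x in (0 : ℝ)..1,
          x * Real.exp (-x) * (1 - Real.exp (-(1 - β) * x)) / (1 - Real.exp (-x)) ^ 2)
        + (∫ x in (0 : ℝ)..1,
            Real.exp (-x) * (1 - x - Real.exp (-x)) / (1 - Real.exp (-x)) ^ 2)
        + ∫ x in Ioi (1 : ℝ), Real.exp (-x) / (1 - Real.exp (-x)) : ℝ) : ℂ) := by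
  rw [ofReal_add, ofReal_add, ← intervalIntegral.integral_ofReal,
    ← intervalIntegral.integral_ofReal, ← integral_complex_ofReal, lampertiShift]
  push_cast
  simp only [neg_mul]

theorem complexDigamma_eq_digamma : complexDigamma = digamma := rfl

theorem lamperti_stable_characteristic_exponent_index_one_general {β w : ℂ} (hβ : β.re < 2)
    (hβw : (β + w).re < 2) :
    ∫ x : ℝ in Ioi 0, (exp (w * x) - 1 - w * x * (if x < 1 then 1 else 0)) *
        (exp (β * x) * (exp x - 1) ^ (-2 : ℤ)) =
      w * (lampertiShift β + 1 - Real.eulerMascheroniConstant) +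
        (-w + 1 - β) * complexDigamma (-w + 2 - β) - (1 - β) * complexDigamma (2 - β) := by
  have hs : 0 < (2 - β).re := by simpa using hβ
  have hsw : 0 < (-w + 2 - β).re := by
    simp only [add_re, sub_re, neg_re, re_ofNat] at hβw ⊢
    linarith
  have hG := integrableOn_gaussKernelTwo hs
  have hGw := integrableOn_gaussKernelTwo hsw
  have hsub : IntegrableOn
      (fun x ↦ gaussKernelTwo (-w + 2 - β) x - gaussKernelTwo (2 - β) x) (Ioi 0) := hGw.sub hG
  rw [setIntegral_congr_fun measurableSet_Ioi fun x hx ↦ lamperti_integrand_eq β w (ne_of_gt hx),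
    integral_add hsub ((integrableOn_compensatorKernel β).const_mul w),
    integral_sub hGw hG, integral_const_mul, integral_compensatorKernel,
    integral_gaussKernelTwo hsw, integral_gaussKernelTwo hs,
    integral_gaussKernel hsw, integral_gaussKernel hs, complexDigamma_eq_digamma]
  ring

theorem lamperti_stable_characteristic_exponent_index_one
    (β l a : ℝ) (hβ : β < 2)
    (ha : a =
      (∫ x in (0:ℝ)..1,
          x * Real.exp (-x) * (1 - Real.exp (-(1 - β) * x)) / (1 - Real.exp (-x)) ^ 2)
        + (∫ x in (0:ℝ)..1,
            Real.exp (-x) * (1 - x - Real.exp (-x)) / (1 - Real.exp (-x)) ^ 2)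
        + ∫ x in Set.Ioi (1:ℝ), Real.exp (-x) / (1 - Real.exp (-x))) :
    ∫ x in Set.Ioi (0:ℝ),
        (Complex.exp (Complex.I * l * x) - 1 - Complex.I * l * x * (if x < 1 then 1 else 0)) *
          ((Real.exp (β * x) * (Real.exp x - 1) ^ (-(2:ℝ)) : ℝ) : ℂ)
      = Complex.I * l * (a + 1 - Real.eulerMascheroniConstant) +
          (-(Complex.I * l) + 1 - β) * complexDigamma (-(Complex.I * l) + 2 - β)
          - (1 - β) * complexDigamma (2 - β) := by
  simp only [Real.rpow_neg_ofNat, ofReal_mul, ofReal_zpow, ofReal_sub, ofReal_exp, ofReal_one]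
  rw [ha, ← lampertiShift_ofReal]
  exact lamperti_stable_characteristic_exponent_index_one_general (by simpa) (by simpa)
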